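/- arXiv:2505.10501 — 3 statements merged into one kernel-verified Lean document; each statement's English description precedes it below -/
import Mathlib

section
/- Let T be a tree on vertex set {1,...,n} with n ≥ 3 and let k ≥ 2 be even. Then the order-k Steiner distance hypermatrix of T is conditionally strictly negative definite: for every nonzero c ∈ ℝ^n with Σ_{i=1}^n c_i = 0, one has M(c,...,c) < 0. -/
/-!
In a tree, an edge `e` lies in the Steiner tree of a nonempty set `U` exactly when deleting `e`
separates two vertices of `U`, so `S(U)` counts the separating edges
(`steinerDist_eq_card_separating`). If `A` and `B` are the two sides of `e`, the tuples that `e`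
does not separate are those lying entirely in `A` or entirely in `B`; hence `e` contributes
`(∑ c)^k - c(A)^k - c(B)^k` to the form, where `c(A) = ∑_{w ∈ A} c w`. When `∑ c = 0` and `k` is
even, `c(B) = -c(A)` and the contribution is `-2 c(A)^k ≤ 0` (`sum_separated`).

Strictness: if all edge contributions vanish, then `c(A) = 0` for both sides of every edge. For a
vertex `v`, the set `V \ {v}` is the disjoint union, over the neighbours `u` of `v`, of the side of
`u` in `G - uv` (`existsUnique_side`), so `c v = ∑ c = 0` for every `v`.
-/

open scoped Classical

/-- The Steiner distance of a set `U` of vertices of a graph `G`: the minimum number of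
edges of a connected subgraph of `G` whose vertex set contains `U`. -/
noncomputable def steinerDist {n : ℕ} (G : SimpleGraph (Fin n)) (U : Set (Fin n)) : ℕ :=
  sInf {m | ∃ H : G.Subgraph, H.Connected ∧ U ⊆ H.verts ∧ H.edgeSet.ncard = m}

/-- The order-`k` Steiner distance multilinear form of a graph `G`. -/
noncomputable def steinerForm {n : ℕ} (G : SimpleGraph (Fin n)) (k : ℕ)
    (c : Fin k → Fin n → ℝ) : ℝ :=
  ∑ i : Fin k → Fin n, (steinerDist G (Set.range i) : ℝ) * ∏ j, c j (i j)

/-- `A` is a choice, for each edge `e` of `G`, of the vertex set of one of the two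
components of `G - e`. -/
def IsEdgeSideChoice {n : ℕ} (G : SimpleGraph (Fin n)) (A : Sym2 (Fin n) → Set (Fin n)) :
    Prop :=
  ∀ e ∈ G.edgeSet, ∃ u v : Fin n, e = s(u, v) ∧
    A e = {w | (G.deleteEdges {e}).Reachable v w}

/-- Deleting the edge `e` separates two vertices of `U`. -/
def Separates {n : ℕ} (G : SimpleGraph (Fin n)) (e : Sym2 (Fin n)) (U : Set (Fin n)) : Prop :=
  ∃ x ∈ U, ∃ y ∈ U, ¬ (G.deleteEdges {e}).Reachable x y

/-- The total weight `c(A)` of the side `A` of `u` in `G - e`. -/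
noncomputable def sideSum {n : ℕ} (G : SimpleGraph (Fin n)) (c : Fin n → ℝ) (e : Sym2 (Fin n))
    (u : Fin n) : ℝ :=
  ∑ w, if (G.deleteEdges {e}).Reachable u w then c w else 0

/-- In an acyclic graph, the endpoints of a path are separated by each edge of the path: another
path avoiding the edge would contradict uniqueness of paths. -/
lemma not_reachable_of_mem_path {n : ℕ} {G : SimpleGraph (Fin n)} (hG : G.IsAcyclic)
    {x y : Fin n} (p : G.Path x y) {e : Sym2 (Fin n)} (he : e ∈ (p : G.Walk x y).edges) :
    ¬ (G.deleteEdges {e}).Reachable x y := by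
  intro h
  obtain ⟨u, v⟩ := e
  obtain ⟨q, hq⟩ := SimpleGraph.reachable_deleteEdges_iff_exists_walk.1 h
  have hpq : p = q.toPath := (hG.subsingleton_path x y).elim _ _
  rw [hpq] at he
  exact hq (SimpleGraph.Walk.edges_toPath_subset_edges q he)

/-- The union of the paths from a fixed vertex of `U` to the vertices of `U` is a connected
subgraph containing `U`, all of whose edges separate `U`. -/
lemma exists_steiner_subgraph {n : ℕ} {G : SimpleGraph (Fin n)} (hT : G.IsTree)
    {U : Set (Fin n)} (hU : U.Nonempty) :
    ∃ H : G.Subgraph, H.Connected ∧ U ⊆ H.verts ∧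
      ∀ e ∈ H.edgeSet, Separates G e U := by
  obtain ⟨x, hx⟩ := hU
  have hp : ∀ y : Fin n, Nonempty (G.Path x y) := fun y =>
    ⟨(hT.connected.preconnected x y).some.toPath⟩
  let p : ∀ y : Fin n, G.Path x y := fun y => (hp y).some
  let H : G.Subgraph := ⨆ y : U, (p y : G.Walk x y).toSubgraph
  have hle : ∀ y : U, (p y : G.Walk x y).toSubgraph ≤ H := fun y =>
    le_iSup (fun y : U => (p y : G.Walk x y).toSubgraph) y
  have hxH : x ∈ H.verts := (hle ⟨x, hx⟩).1 (SimpleGraph.Walk.start_mem_verts_toSubgraph _)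
  refine ⟨H, ?_, ?_, ?_⟩
  · rw [SimpleGraph.Subgraph.connected_iff', SimpleGraph.connected_iff_exists_forall_reachable]
    refine ⟨⟨x, hxH⟩, ?_⟩
    rintro ⟨z, hz⟩
    have hz' := hz
    simp only [H, SimpleGraph.Subgraph.verts_iSup, Set.mem_iUnion] at hz'
    obtain ⟨y, hy⟩ := hz'
    have := (p y : G.Walk x y).toSubgraph_connected.preconnected
      ⟨x, SimpleGraph.Walk.start_mem_verts_toSubgraph _⟩ ⟨z, hy⟩
    exact this.map (SimpleGraph.Subgraph.inclusion (hle y))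
  · intro y hy
    exact (hle ⟨y, hy⟩).1 (SimpleGraph.Walk.end_mem_verts_toSubgraph _)
  · intro e he
    simp only [H, SimpleGraph.Subgraph.edgeSet_iSup, Set.mem_iUnion] at he
    obtain ⟨y, hy⟩ := he
    rw [SimpleGraph.Walk.mem_edges_toSubgraph] at hy
    exact ⟨x, hx, y, y.2, not_reachable_of_mem_path hT.isAcyclic _ hy⟩

/-- A connected subgraph containing `U` uses every edge that separates `U`. -/
lemma mem_edgeSet_of_separates {n : ℕ} {G : SimpleGraph (Fin n)} {U : Set (Fin n)}
    {H : G.Subgraph} (hH : H.Connected) (hU : U ⊆ H.verts) {e : Sym2 (Fin n)}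
    (he : Separates G e U) : e ∈ H.edgeSet := by
  obtain ⟨x, hx, y, hy, hxy⟩ := he
  by_contra hne
  apply hxy
  have h := hH.preconnected ⟨x, hU hx⟩ ⟨y, hU hy⟩
  let f : H.coe →g G.deleteEdges {e} :=
    { toFun := fun v => v.1
      map_rel' := by
        intro a b hab
        rw [SimpleGraph.deleteEdges_adj]
        refine ⟨H.adj_sub hab, ?_⟩
        rintro rfl
        exact hne hab }
  exact h.map f

lemma steinerDist_eq_card_separating {n : ℕ} {G : SimpleGraph (Fin n)} (hT : G.IsTree)
    {U : Set (Fin n)} (hU : U.Nonempty) :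
    steinerDist G U = (G.edgeFinset.filter (fun e => Separates G e U)).card := by
  obtain ⟨H, hH, hUH, hsep⟩ := exists_steiner_subgraph hT hU
  have hle : ∀ K : G.Subgraph, K.Connected → U ⊆ K.verts →
      ((G.edgeFinset.filter (fun e => Separates G e U) : Finset _) : Set (Sym2 (Fin n))) ⊆
        K.edgeSet := by
    intro K hK hUK e he
    simp only [Finset.coe_filter, Set.mem_ofPred_eq] at he
    exact mem_edgeSet_of_separates hK hUK he.2
  have heq : H.edgeSet =
      ((G.edgeFinset.filter (fun e => Separates G e U) : Finset _) : Set (Sym2 (Fin n))) := by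
    refine Set.Subset.antisymm (fun e he => ?_) (hle H hH hUH)
    simp only [Finset.coe_filter, Set.mem_ofPred_eq, SimpleGraph.mem_edgeFinset]
    exact ⟨H.edgeSet_subset he, hsep e he⟩
  unfold steinerDist
  apply le_antisymm
  · apply Nat.sInf_le
    exact ⟨H, hH, hUH, by rw [heq, Set.ncard_coe_finset]⟩
  · refine le_csInf (Set.nonempty_of_mem (x := H.edgeSet.ncard) ⟨H, hH, hUH, rfl⟩) ?_
    rintro m ⟨K, hK, hUK, rfl⟩
    rw [← Set.ncard_coe_finset]
    exact Set.ncard_le_ncard (hle K hK hUK) (Set.toFinite _)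

/-- In a connected graph, the component of `u` and that of `v` cover `G - uv`. -/
lemma reachable_or_reachable {n : ℕ} {G : SimpleGraph (Fin n)} (hG : G.Connected)
    (u v w : Fin n) :
    (G.deleteEdges {s(u, v)}).Reachable u w ∨ (G.deleteEdges {s(u, v)}).Reachable v w := by
  have h := hG.preconnected u w
  rw [SimpleGraph.reachable_iff_reflTransGen] at h
  induction h with
  | refl => exact Or.inl (SimpleGraph.Reachable.refl _)
  | @tail a b _ hab ih =>
    by_cases hE : s(a, b) = s(u, v)
    · rcases Sym2.eq_iff.1 hE with ⟨-, rfl⟩ | ⟨-, rfl⟩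
      · exact Or.inr (SimpleGraph.Reachable.refl _)
      · exact Or.inl (SimpleGraph.Reachable.refl _)
    · have : (G.deleteEdges {s(u, v)}).Adj a b := by
        rw [SimpleGraph.deleteEdges_adj]
        exact ⟨hab, hE⟩
      exact ih.imp (fun h => h.trans this.reachable) (fun h => h.trans this.reachable)

lemma not_reachable_of_adj {n : ℕ} {G : SimpleGraph (Fin n)} (hT : G.IsTree) {u v : Fin n}
    (h : G.Adj u v) : ¬ (G.deleteEdges {s(u, v)}).Reachable u v :=
  SimpleGraph.isAcyclic_iff_forall_adj_isBridge.1 hT.isAcyclic h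

lemma sideSum_add_sideSum {n : ℕ} {G : SimpleGraph (Fin n)} (hT : G.IsTree) {u v : Fin n}
    (h : G.Adj u v) (c : Fin n → ℝ) :
    sideSum G c s(u, v) u + sideSum G c s(u, v) v = ∑ i, c i := by
  unfold sideSum
  rw [← Finset.sum_add_distrib]
  refine Finset.sum_congr rfl fun w _ => ?_
  have h1 := reachable_or_reachable hT.connected u v w
  have h2 := not_reachable_of_adj hT h
  by_cases hu : (G.deleteEdges {s(u, v)}).Reachable u w
  · have hv : ¬ (G.deleteEdges {s(u, v)}).Reachable v w := fun hv => h2 (hu.trans hv.symm)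
    simp [hu, hv]
  · simp [hu, h1.resolve_left hu]

lemma sideSum_pow {n : ℕ} (G : SimpleGraph (Fin n)) (c : Fin n → ℝ) (e : Sym2 (Fin n))
    (u : Fin n) (k : ℕ) :
    sideSum G c e u ^ k = ∑ i : Fin k → Fin n,
      if ∀ j, (G.deleteEdges {e}).Reachable u (i j) then ∏ j, c (i j) else 0 := by
  unfold sideSum
  rw [Fintype.sum_pow]
  refine Finset.sum_congr rfl fun i _ => ?_
  split_ifs with h
  · exact Finset.prod_congr rfl fun j _ => by rw [if_pos (h j)]
  · push Not at h
    obtain ⟨j, hj⟩ := h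
    exact Finset.prod_eq_zero (Finset.mem_univ j) (if_neg hj)

/-- The contribution of the edge `uv` to the form, for even `k` and `c` of total weight zero. -/
lemma sum_separated {n k : ℕ} {G : SimpleGraph (Fin n)} (hT : G.IsTree) (hk : 2 ≤ k)
    (hke : Even k) {u v : Fin n} (h : G.Adj u v) {c : Fin n → ℝ} (hc : ∑ i, c i = 0) :
    ∑ i : Fin k → Fin n, (if Separates G s(u, v) (Set.range i) then ∏ j, c (i j) else 0)
      = -2 * sideSum G c s(u, v) u ^ k := by
  have hv : sideSum G c s(u, v) v = -sideSum G c s(u, v) u := by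
    linarith [sideSum_add_sideSum hT h c]
  have key : ∑ i : Fin k → Fin n, (if Separates G s(u, v) (Set.range i) then ∏ j, c (i j) else 0)
      = (∑ i, c i) ^ k - sideSum G c s(u, v) u ^ k - sideSum G c s(u, v) v ^ k := by
    rw [sideSum_pow, sideSum_pow, Fintype.sum_pow, ← Finset.sum_sub_distrib,
      ← Finset.sum_sub_distrib]
    refine Finset.sum_congr rfl fun i _ => ?_
    have hbr := not_reachable_of_adj hT h
    have hor := fun w => reachable_or_reachable hT.connected u v w
    let j₀ : Fin k := ⟨0, by omega⟩
    by_cases hu : ∀ j, (G.deleteEdges {s(u, v)}).Reachable u (i j)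
    · have hnv : ¬ ∀ j, (G.deleteEdges {s(u, v)}).Reachable v (i j) := fun hv =>
        hbr ((hu j₀).trans (hv j₀).symm)
      have hns : ¬ Separates G s(u, v) (Set.range i) := by
        rintro ⟨_, ⟨a, rfl⟩, _, ⟨b, rfl⟩, hab⟩
        exact hab ((hu a).symm.trans (hu b))
      rw [if_neg hns, if_pos hu, if_neg hnv]; ring
    · by_cases hv : ∀ j, (G.deleteEdges {s(u, v)}).Reachable v (i j)
      · have hns : ¬ Separates G s(u, v) (Set.range i) := by
          rintro ⟨_, ⟨a, rfl⟩, _, ⟨b, rfl⟩, hab⟩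
          exact hab ((hv a).symm.trans (hv b))
        rw [if_neg hns, if_neg hu, if_pos hv]; ring
      · have hs : Separates G s(u, v) (Set.range i) := by
          push Not at hu hv
          obtain ⟨a, ha⟩ := hu
          obtain ⟨b, hb⟩ := hv
          have ha' := (hor (i a)).resolve_left ha
          have hb' := (hor (i b)).resolve_right hb
          exact ⟨i a, ⟨a, rfl⟩, i b, ⟨b, rfl⟩, fun hab => hbr (hb'.trans (ha'.trans hab).symm)⟩
        rw [if_pos hs, if_neg hu, if_neg hv]; ring
  rw [key, hv, hc, hke.neg_pow, zero_pow (by omega)]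
  ring

lemma steinerForm_eq_sum_edges {n k : ℕ} {G : SimpleGraph (Fin n)} (hT : G.IsTree) (hk : 2 ≤ k)
    (c : Fin n → ℝ) :
    steinerForm G k (fun _ => c) = ∑ e ∈ G.edgeFinset, ∑ i : Fin k → Fin n,
      (if Separates G e (Set.range i) then ∏ j, c (i j) else 0) := by
  rw [Finset.sum_comm]
  unfold steinerForm
  refine Finset.sum_congr rfl fun i _ => ?_
  have hne : (Set.range i).Nonempty := ⟨i ⟨0, by omega⟩, Set.mem_range_self _⟩
  rw [steinerDist_eq_card_separating hT hne, ← Finset.sum_filter, Finset.sum_const, nsmul_eq_mul]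

/-- For `w ≠ v`, exactly one neighbour `u` of `v` has `w` on its side of the edge `uv`: the first
step of the path from `v` to `w`. -/
lemma existsUnique_side {n : ℕ} {G : SimpleGraph (Fin n)} (hT : G.IsTree) {v w : Fin n}
    (hvw : w ≠ v) :
    ∃! u, G.Adj u v ∧ (G.deleteEdges {s(u, v)}).Reachable u w := by
  obtain ⟨p, hp⟩ : ∃ p : G.Walk v w, p.IsPath :=
    ⟨_, (hT.connected.preconnected v w).some.toPath.2⟩
  cases p with
  | nil => exact absurd rfl hvw
  | cons hvu q =>
    rename_i u
    rw [SimpleGraph.Walk.cons_isPath_iff] at hp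
    -- `q` avoids `v`, so it survives the deletion of any edge at `v`
    have hq : ∀ x, (G.deleteEdges {s(x, v)}).Reachable u w := fun x =>
      ⟨q.toDeleteEdge _ fun hmem => hp.2 (q.snd_mem_support_of_mem_edges hmem)⟩
    refine ⟨u, ⟨hvu.symm, hq u⟩, ?_⟩
    rintro x ⟨hxv, hxw⟩
    by_contra hxu
    have hadj : (G.deleteEdges {s(x, v)}).Adj u v := by
      rw [SimpleGraph.deleteEdges_adj]
      refine ⟨hvu.symm, ?_⟩
      simp only [Set.mem_singleton_iff, Sym2.eq_iff]
      rintro (⟨rfl, -⟩ | ⟨rfl, -⟩)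
      · exact hxu rfl
      · exact hvu.ne rfl
    exact not_reachable_of_adj hT hxv ((hxw.trans (hq x).symm).trans hadj.reachable)

/-- Summing the sides of the neighbours of `v` covers every vertex except `v` once. -/
lemma sum_neighbor_sideSum {n : ℕ} {G : SimpleGraph (Fin n)} (hT : G.IsTree) (c : Fin n → ℝ)
    (v : Fin n) :
    ∑ u, (if G.Adj u v then sideSum G c s(u, v) u else 0) = ∑ i, c i - c v := by
  have h1 : ∀ u, (if G.Adj u v then sideSum G c s(u, v) u else 0) =
      ∑ w, if G.Adj u v ∧ (G.deleteEdges {s(u, v)}).Reachable u w then c w else 0 := by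
    intro u
    by_cases h : G.Adj u v <;> simp [h, sideSum]
  rw [Finset.sum_congr rfl fun u _ => h1 u, Finset.sum_comm,
    ← Finset.add_sum_erase _ c (Finset.mem_univ v), add_sub_cancel_left,
    ← Finset.add_sum_erase _ _ (Finset.mem_univ v)]
  have h0 : ∑ u, (if G.Adj u v ∧ (G.deleteEdges {s(u, v)}).Reachable u v then c v else 0) = 0 :=
    Finset.sum_eq_zero fun u _ => if_neg fun h => not_reachable_of_adj hT h.1 h.2
  rw [h0, zero_add]
  refine Finset.sum_congr rfl fun w hw => ?_
  obtain ⟨u, hu, huniq⟩ := existsUnique_side hT (Finset.ne_of_mem_erase hw)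
  rw [Finset.sum_eq_single u (fun x _ hx => if_neg fun h => hx (huniq x h)) (by simp), if_pos hu]

theorem stmt3 (n k : ℕ) (hn : 3 ≤ n) (hk : 2 ≤ k) (hke : Even k)
    (G : SimpleGraph (Fin n)) (hT : G.IsTree)
    (c : Fin n → ℝ) (hc0 : c ≠ 0) (hc : ∑ i, c i = 0) :
    steinerForm G k (fun _ => c) < 0 := by
  rw [steinerForm_eq_sum_edges hT (by omega)]
  have hnonpos : ∀ e ∈ G.edgeFinset, ∑ i : Fin k → Fin n,
      (if Separates G e (Set.range i) then ∏ j, c (i j) else 0) ≤ 0 := by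
    rintro ⟨u, v⟩ he
    have hadj : G.Adj u v := by simpa using he
    have := hke.pow_nonneg (sideSum G c s(u, v) u)
    exact (sum_separated hT hk hke hadj hc).trans_le (by linarith)
  refine lt_of_le_of_ne (Finset.sum_nonpos hnonpos) fun hzero => hc0 ?_
  rw [Finset.sum_eq_zero_iff_of_nonpos hnonpos] at hzero
  have hside : ∀ u v, G.Adj u v → sideSum G c s(u, v) u = 0 := by
    intro u v hadj
    have h := hzero s(u, v) (by simpa using hadj)
    rw [sum_separated hT hk hke hadj hc] at h
    exact eq_zero_of_pow_eq_zero (n := k) (by linarith)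
  funext v
  have hv := sum_neighbor_sideSum hT c v
  rw [Finset.sum_eq_zero fun u _ => ite_eq_right_iff.2 (hside u v), hc] at hv
  simpa using hv.symm
end

section
/- Let T be a tree on vertex set {1,...,n} with n ≥ 2, let k ≥ 2 be even, and let c_1,...,c_k ∈ ℝ^n each satisfy Σ_{i=1}^n (c_j)_i = 0. Then M(c_1,...,c_k) = −2 Σ_{e ∈ E(T)} ∏_{j=1}^k (a'_e · c_j), where · denotes the standard dot product on ℝ^n. -/
/-!
An edge `e` of the tree separates a vertex set `U` when `U` meets both sides of `e`. The Steiner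
distance of a nonempty `U` is the number of edges separating it (`steinerDist_eq_card`): a
connected subgraph containing `U` must use every separating edge, and the union of the paths from
one fixed vertex of `U` to the others uses no other edge, by uniqueness of paths in a tree.

The indicator that `e` separates `{i_1, …, i_k}` is `1 - ∏ a_e(i_j) - ∏ (1 - a_e(i_j))`. Contracted
with vectors `c_j` of coordinate sum zero, the first term vanishes, the second gives
`-∏ (a_e · c_j)`, and the third gives `-(-1)^k ∏ (a_e · c_j)`, which is the same as `k` is even.
Finally `a'_e · c_j = a_e · c_j` because `a'_e` and `a_e` differ by a multiple of the all-ones vector.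
-/

open scoped Classical

/-- The vector `a'_e = a_e - (|A(e)|/n) 𝕁`, where `a_e` is the indicator vector of the
side `A e` of the edge `e`. -/
noncomputable def aVec' {n : ℕ} (A : Sym2 (Fin n) → Set (Fin n)) (e : Sym2 (Fin n)) :
    Fin n → ℝ :=
  fun i => (A e).indicator 1 i - (A e).ncard / n

open SimpleGraph

/-- Deleting one edge from a connected graph leaves at most two components. -/
lemma reachable_delete_or {V : Type*} {G : SimpleGraph V} (hG : G.Connected) (u v w : V) :
    (G.deleteEdges {s(u, v)}).Reachable u w ∨ (G.deleteEdges {s(u, v)}).Reachable v w := by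
  obtain ⟨p⟩ := hG.preconnected w u
  induction p with
  | nil => exact Or.inl (Reachable.refl _)
  | @cons a b t h p ih =>
    by_cases hab : s(a, b) = s(t, v)
    · rcases Sym2.eq_iff.mp hab with ⟨rfl, rfl⟩ | ⟨rfl, rfl⟩
      · exact Or.inl (Reachable.refl _)
      · exact Or.inr (Reachable.refl _)
    · have hadj : (G.deleteEdges {s(t, v)}).Adj b a := by
        rw [deleteEdges_adj]
        exact ⟨h.symm, fun h' => hab (Sym2.eq_swap.trans h')⟩
      exact ih.imp (fun h' => h'.trans hadj.reachable) (fun h' => h'.trans hadj.reachable)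

/-- Two vertices lie on the same side of an edge as soon as both or neither belong to the chosen
side. -/
lemma reachable_delete_of_side_iff {n : ℕ} {G : SimpleGraph (Fin n)} (hG : G.Connected)
    {A : Sym2 (Fin n) → Set (Fin n)} (hA : IsEdgeSideChoice G A) {e : Sym2 (Fin n)}
    (he : e ∈ G.edgeSet) {x y : Fin n} (h : x ∈ A e ↔ y ∈ A e) :
    (G.deleteEdges {e}).Reachable x y := by
  obtain ⟨u, v, rfl, hAe⟩ := hA e he
  simp only [hAe, Set.mem_ofPred_eq] at h
  by_cases hx : (G.deleteEdges {s(u, v)}).Reachable v x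
  · exact hx.symm.trans (h.mp hx)
  · have hy := fun hy => hx (h.mpr hy)
    exact ((reachable_delete_or hG u v x).resolve_right hx).symm.trans
      ((reachable_delete_or hG u v y).resolve_right hy)

lemma side_iff_of_reachable_delete {n : ℕ} {G : SimpleGraph (Fin n)}
    {A : Sym2 (Fin n) → Set (Fin n)} (hA : IsEdgeSideChoice G A) {e : Sym2 (Fin n)}
    (he : e ∈ G.edgeSet) {x y : Fin n} (h : (G.deleteEdges {e}).Reachable x y) :
    x ∈ A e ↔ y ∈ A e := by
  obtain ⟨u, v, rfl, hAe⟩ := hA e he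
  simp only [hAe, Set.mem_ofPred_eq]
  exact ⟨fun h' => h'.trans h, fun h' => h'.trans h.symm⟩

/-- In a tree, the endpoints of a path lie on different sides of every edge of that path. -/
lemma not_reachable_delete_of_mem_path {V : Type*} {G : SimpleGraph V} (hG : G.IsAcyclic)
    {x y : V} {p : G.Walk x y} (hp : p.IsPath) {e : Sym2 V} (he : e ∈ p.edges) :
    ¬ (G.deleteEdges {e}).Reachable x y := by
  intro h
  obtain ⟨q, hq⟩ := h.exists_isPath
  have hle : G.deleteEdges {e} ≤ G := deleteEdges_le _
  have heq : (⟨p, hp⟩ : G.Path x y) = ⟨q.mapLe hle, hq.mapLe hle⟩ := (hG.subsingleton_path x y).elim _ _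
  have heq' : p = q.mapLe hle := congrArg Subtype.val heq
  rw [heq', Walk.edges_mapLe_eq_edges] at he
  have := q.edges_subset_edgeSet he
  rw [edgeSet_deleteEdges] at this
  exact this.2 rfl

/-- The edges of the tree that separate the range of `i`. -/
noncomputable def sepEdges {n k : ℕ} (G : SimpleGraph (Fin n)) (A : Sym2 (Fin n) → Set (Fin n))
    (i : Fin k → Fin n) : Finset (Sym2 (Fin n)) :=
  G.edgeFinset.filter fun e => (∃ j, i j ∈ A e) ∧ ∃ j, i j ∉ A e

lemma sepEdges_subset {n k : ℕ} {G : SimpleGraph (Fin n)} {A : Sym2 (Fin n) → Set (Fin n)}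
    (hA : IsEdgeSideChoice G A) (i : Fin k → Fin n) {H : G.Subgraph} (hH : H.Connected)
    (hi : Set.range i ⊆ H.verts) : (sepEdges G A i : Set (Sym2 (Fin n))) ⊆ H.edgeSet := by
  intro e he
  simp only [sepEdges, Finset.coe_filter, Set.mem_ofPred_eq, mem_edgeFinset] at he
  obtain ⟨heG, ⟨j, hj⟩, ⟨l, hl⟩⟩ := he
  obtain ⟨p, hp⟩ := ((Subgraph.connected_iff_forall_exists_walk_subgraph H).mp hH).2
    (hi ⟨j, rfl⟩) (hi ⟨l, rfl⟩)
  by_contra hne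
  have hep : e ∉ p.edges := fun h =>
    hne (Subgraph.edgeSet_mono hp ((Walk.mem_edges_toSubgraph p).mpr h))
  exact hl ((side_iff_of_reachable_delete hA heG (p.toDeleteEdge e hep).reachable).mp hj)

/-- The union of the paths from `i j₀` to the other `i j` is a Steiner tree. -/
lemma exists_steiner_subgraph_s8 {n k : ℕ} {G : SimpleGraph (Fin n)} (hT : G.IsTree)
    {A : Sym2 (Fin n) → Set (Fin n)} (hA : IsEdgeSideChoice G A) (i : Fin k → Fin n)
    (j₀ : Fin k) : ∃ H : G.Subgraph, H.Connected ∧ Set.range i ⊆ H.verts ∧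
      H.edgeSet ⊆ sepEdges G A i := by
  have hpath : ∀ j, ∃ p : G.Walk (i j₀) (i j), p.IsPath := fun j =>
    (hT.connected.preconnected (i j₀) (i j)).exists_isPath
  choose p hp using hpath
  have hle : ∀ j, (p j).toSubgraph ≤ ⨆ j, (p j).toSubgraph := fun j =>
    le_iSup (fun j => (p j).toSubgraph) j
  have hroot : ∀ w ∈ (⨆ j, (p j).toSubgraph).verts,
      ∃ q : G.Walk (i j₀) w, q.toSubgraph ≤ ⨆ j, (p j).toSubgraph := by
    intro w hw
    simp only [Subgraph.verts_iSup, Set.mem_iUnion, Walk.mem_verts_toSubgraph] at hw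
    obtain ⟨j, hj⟩ := hw
    refine ⟨(p j).takeUntil w hj, le_trans ?_ (hle j)⟩
    conv_rhs => rw [← (p j).take_spec hj, Walk.toSubgraph_append]
    exact le_sup_left
  refine ⟨⨆ j, (p j).toSubgraph, ?_, ?_, ?_⟩
  · rw [Subgraph.connected_iff_forall_exists_walk_subgraph]
    refine ⟨⟨i j₀, (hle j₀).1 (p j₀).start_mem_verts_toSubgraph⟩, fun {x y} hx hy => ?_⟩
    obtain ⟨q, hq⟩ := hroot x hx
    obtain ⟨r, hr⟩ := hroot y hy
    refine ⟨q.reverse.append r, ?_⟩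
    rw [Walk.toSubgraph_append, Walk.toSubgraph_reverse]
    exact sup_le hq hr
  · rintro _ ⟨j, rfl⟩
    exact (hle j).1 (p j).end_mem_verts_toSubgraph
  · intro e he
    simp only [Subgraph.edgeSet_iSup, Set.mem_iUnion, Walk.mem_edges_toSubgraph] at he
    obtain ⟨j, hj⟩ := he
    have heG := (p j).edges_subset_edgeSet hj
    have hne : ¬ (i j₀ ∈ A e ↔ i j ∈ A e) := fun h =>
      not_reachable_delete_of_mem_path hT.isAcyclic (hp j) hj
        (reachable_delete_of_side_iff hT.connected hA heG h)
    simp only [sepEdges, Finset.coe_filter, Set.mem_ofPred_eq, mem_edgeFinset]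
    refine ⟨heG, ?_⟩
    by_cases h0 : i j₀ ∈ A e
    · exact ⟨⟨j₀, h0⟩, ⟨j, fun h => hne ⟨fun _ => h, fun _ => h0⟩⟩⟩
    · exact ⟨⟨j, by tauto⟩, ⟨j₀, h0⟩⟩

/-- The Steiner distance of a nonempty set is the number of edges separating it. -/
lemma steinerDist_eq_card {n k : ℕ} {G : SimpleGraph (Fin n)} (hT : G.IsTree)
    {A : Sym2 (Fin n) → Set (Fin n)} (hA : IsEdgeSideChoice G A) (i : Fin k → Fin n)
    (j₀ : Fin k) : steinerDist G (Set.range i) = (sepEdges G A i).card := by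
  obtain ⟨H, hH, hi, hsub⟩ := exists_steiner_subgraph_s8 hT hA i j₀
  refine IsLeast.csInf_eq ⟨⟨H, hH, hi, ?_⟩, ?_⟩
  · rw [hsub.antisymm (sepEdges_subset hA i hH hi), Set.ncard_coe_finset]
  · rintro _ ⟨K, hK, hiK, rfl⟩
    rw [← Set.ncard_coe_finset]
    exact Set.ncard_le_ncard (sepEdges_subset hA i hK hiK) (Set.toFinite _)

/-- The indicator that `S` separates the range of `i`, as a polynomial in the indicator of `S`. -/
lemma sep_indicator {n k : ℕ} (hk : 0 < k) (S : Set (Fin n)) (i : Fin k → Fin n) :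
    (if (∃ j, i j ∈ S) ∧ ∃ j, i j ∉ S then (1 : ℝ) else 0) =
      1 - ∏ j, S.indicator (1 : Fin n → ℝ) (i j)
        - ∏ j, (1 - S.indicator (1 : Fin n → ℝ) (i j)) := by
  by_cases h1 : ∃ j, i j ∈ S
  · obtain ⟨j, hj⟩ := h1
    have hz : ∏ j, (1 - S.indicator (1 : Fin n → ℝ) (i j)) = 0 :=
      Finset.prod_eq_zero (Finset.mem_univ j) (by simp [hj])
    by_cases h2 : ∃ j, i j ∉ S
    · obtain ⟨l, hl⟩ := h2
      have hz' : ∏ j, S.indicator (1 : Fin n → ℝ) (i j) = 0 :=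
        Finset.prod_eq_zero (Finset.mem_univ l) (by simp [hl])
      rw [if_pos ⟨⟨j, hj⟩, ⟨l, hl⟩⟩, hz, hz']
      norm_num
    · rw [if_neg (fun h => h2 h.2), hz]
      push Not at h2
      simp [h2]
  · rw [if_neg (fun h => h1 h.1)]
    push Not at h1
    simp [h1, hk.ne']

/-- The contribution of a single edge, with side `S`, to the Steiner form. -/
lemma sum_sep {n k : ℕ} (hk : 0 < k) (hke : Even k) (S : Set (Fin n))
    (c : Fin k → Fin n → ℝ) (hc : ∀ j, ∑ i, c j i = 0) :
    ∑ i : Fin k → Fin n, (if (∃ j, i j ∈ S) ∧ ∃ j, i j ∉ S then (1 : ℝ) else 0) * ∏ j, c j (i j) =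
      -2 * ∏ j, ∑ x, S.indicator (1 : Fin n → ℝ) x * c j x := by
  simp only [sep_indicator hk, sub_mul, one_mul, Finset.sum_sub_distrib,
    ← Finset.prod_mul_distrib]
  have h := fun f : Fin k → Fin n → ℝ =>
    (Finset.prod_univ_sum (fun _ : Fin k => (Finset.univ : Finset (Fin n))) f).symm
  simp only [Fintype.piFinset_univ] at h
  rw [h c, h (fun j x => S.indicator (1 : Fin n → ℝ) x * c j x),
    h (fun j x => c j x - S.indicator (1 : Fin n → ℝ) x * c j x)]
  simp only [Finset.sum_sub_distrib, hc, zero_sub, Finset.prod_neg, Finset.card_univ,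
    Fintype.card_fin, hke.neg_one_pow, Finset.prod_const, zero_pow hk.ne']
  ring

lemma aVec'_dot {n : ℕ} (A : Sym2 (Fin n) → Set (Fin n)) (e : Sym2 (Fin n)) (c : Fin n → ℝ)
    (hc : ∑ i, c i = 0) :
    ∑ i, aVec' A e i * c i = ∑ i, (A e).indicator (1 : Fin n → ℝ) i * c i := by
  simp only [aVec', sub_mul, Finset.sum_sub_distrib, ← Finset.mul_sum, hc, mul_zero, sub_zero]

theorem stmt8 (n k : ℕ) (hn : 2 ≤ n) (hk : 2 ≤ k) (hke : Even k)
    (G : SimpleGraph (Fin n)) (hT : G.IsTree)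
    (A : Sym2 (Fin n) → Set (Fin n)) (hA : IsEdgeSideChoice G A)
    (c : Fin k → Fin n → ℝ) (hc : ∀ j, ∑ i, c j i = 0) :
    steinerForm G k c =
      -2 * ∑ e ∈ G.edgeFinset, ∏ j, ∑ i, aVec' A e i * c j i := by
  have hk0 : 0 < k := by omega
  simp only [aVec'_dot A _ _ (hc _), Finset.mul_sum, ← sum_sep hk0 hke _ c hc]
  rw [Finset.sum_comm, steinerForm]
  refine Finset.sum_congr rfl fun i _ => ?_
  rw [steinerDist_eq_card hT hA i ⟨0, hk0⟩, ← Finset.sum_mul, sepEdges, Finset.sum_boole]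
end

section
/- Let T be a tree on vertex set {1,...,n} with n ≥ 3, let M denote the order-4 Steiner distance form of T, and let A = (2/n)J_n − I_n. Then the order-4 hypermatrix C_1 + C_3 is positive definite: for every nonzero v ∈ ℝ^n, M(v, v, v, Av) + M(v, Av, Av, Av) > 0. -/
/-!
For a tree, the Steiner distance of a set `U` counts the edges `e` for which `U` meets both
components of `G - e` (`steinerDist_eq`). Hence, if `B e` denotes one of these two sides, the
Steiner form splits as a sum over edges of
`∏ⱼ cⱼ(V) - ∏ⱼ cⱼ(B e) - ∏ⱼ cⱼ((B e)ᶜ)`, where `c(S) = ∑ x ∈ S, c x` (`steinerForm_eq`).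

Put `σ = v(V)`, `p = |B e| / n`, `q = 1 - p` and `v(B e) = σ p + t`. The reflection `A` fixes the
total sum and sends `v(B e)` to `σ p - t`, so the contribution of `e` to the sum of the two forms
is `2 σ⁴ (1 - p⁴ - q⁴) + 4 t⁴`. As `0 < p < 1` this is nonnegative, and it vanishes only if
`σ = t = 0`. Thus if the total is not positive, then `v` has sum zero on each side of each edge.
This forces `v = 0` (`eq_zero_of_side_sums`): otherwise root the tree and look at a vertex `x` of
the support of `v` farthest from the root; the side of the parent edge of `x` that contains `x`
meets the support of `v` in `x` only.
-/

open scoped Classical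

/-! ### The two sides of an edge of a tree -/

/-- `B` is one of the two sides of the edge `e`: it is a proper nonempty set of vertices, and two
vertices are joined in `G - e` iff both or neither of them lie in `B`. -/
def IsSide {n : ℕ} (G : SimpleGraph (Fin n)) (e : Sym2 (Fin n)) (B : Finset (Fin n)) : Prop :=
  B.Nonempty ∧ Bᶜ.Nonempty ∧
    ∀ u w, (G.deleteEdges {e}).Reachable u w ↔ (u ∈ B ↔ w ∈ B)

lemma exists_isSide {n : ℕ} {G : SimpleGraph (Fin n)} (hT : G.IsTree) (e : Sym2 (Fin n))
    (he : e ∈ G.edgeSet) : ∃ B, IsSide G e B := by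
  induction e with
  | _ x y =>
  have hb : ¬ (G.deleteEdges {s(x, y)}).Reachable x y :=
    SimpleGraph.isBridge_iff.1 (SimpleGraph.isAcyclic_iff_forall_isBridge.1 hT.isAcyclic he)
  have key : ∀ a w, G.Walk a w → ((G.deleteEdges {s(x, y)}).Reachable x a ∨
      (G.deleteEdges {s(x, y)}).Reachable y a) → ((G.deleteEdges {s(x, y)}).Reachable x w ∨
      (G.deleteEdges {s(x, y)}).Reachable y w) := by
    intro a w p
    induction p with
    | nil => exact id
    | @cons a b c h p ih =>
      intro ha
      apply ih
      by_cases hab : s(a, b) = s(x, y)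
      · rcases Sym2.eq_iff.1 hab with ⟨-, rfl⟩ | ⟨-, rfl⟩
        · exact Or.inr (SimpleGraph.Reachable.refl _)
        · exact Or.inl (SimpleGraph.Reachable.refl _)
      · have hadj : (G.deleteEdges {s(x, y)}).Adj a b := by
          rw [SimpleGraph.deleteEdges_adj]
          exact ⟨h, by simpa using hab⟩
        exact ha.imp (·.trans hadj.reachable) (·.trans hadj.reachable)
  have hall : ∀ w, (G.deleteEdges {s(x, y)}).Reachable x w ∨
      (G.deleteEdges {s(x, y)}).Reachable y w := fun w => by
    obtain ⟨p⟩ := hT.connected x w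
    exact key x w p (Or.inl (SimpleGraph.Reachable.refl _))
  refine ⟨Finset.univ.filter fun w => (G.deleteEdges {s(x, y)}).Reachable x w, ⟨x, by simp⟩,
    ⟨y, by simpa using hb⟩, fun u w => ?_⟩
  simp only [Finset.mem_filter, Finset.mem_univ, true_and]
  refine ⟨fun h => ⟨fun h' => h'.trans h, fun h' => h'.trans h.symm⟩, fun h => ?_⟩
  by_cases hu : (G.deleteEdges {s(x, y)}).Reachable x u
  · exact hu.symm.trans (h.1 hu)
  · have h1 := (hall u).resolve_left hu
    have h2 := (hall w).resolve_left (fun hw => hu (h.2 hw))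
    exact h1.symm.trans h2

lemma not_reachable_of_mem_path_s18 {n : ℕ} {G : SimpleGraph (Fin n)} (hT : G.IsTree) {a b : Fin n}
    (p : G.Walk a b) (hp : p.IsPath) {e : Sym2 (Fin n)} (he : e ∈ p.edges) :
    ¬ (G.deleteEdges {e}).Reachable a b := by
  induction e with
  | _ x y =>
  rw [SimpleGraph.reachable_deleteEdges_iff_exists_walk]
  rintro ⟨q, hq⟩
  have := (hT.isAcyclic.subsingleton_path a b).elim ⟨p, hp⟩ ⟨q.bypass, q.bypass_isPath⟩
  have h2 : p = q.bypass := congrArg Subtype.val this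
  rw [h2] at he
  exact hq (q.edges_bypass_subset_edges he)

/-! ### Steiner distance as a count of separating edges -/

/-- A connected subgraph that avoids the edge `e` cannot meet both components of `G - e`. -/
lemma reachable_of_subgraph {n : ℕ} {G : SimpleGraph (Fin n)} {H : G.Subgraph} (hH : H.Connected)
    {e : Sym2 (Fin n)} (he : e ∉ H.edgeSet) {a b : Fin n} (ha : a ∈ H.verts) (hb : b ∈ H.verts) :
    (G.deleteEdges {e}).Reachable a b := by
  let f : H.coe →g G.deleteEdges {e} :=
    { toFun := Subtype.val
      map_rel' := by
        intro u w h
        rw [SimpleGraph.deleteEdges_adj]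
        refine ⟨H.adj_sub h, ?_⟩
        rintro h'
        apply he
        rw [← Set.mem_singleton_iff.1 h']
        exact h }
  exact (hH.coe.preconnected ⟨a, ha⟩ ⟨b, hb⟩).map f

/-- The union of the paths from a fixed vertex `a` to the vertices of `U`. -/
lemma exists_steiner_tree {n : ℕ} {G : SimpleGraph (Fin n)} (hT : G.IsTree) (a : Fin n)
    (U : Finset (Fin n)) : ∃ H : G.Subgraph, H.Connected ∧ a ∈ H.verts ∧ (U : Set _) ⊆ H.verts ∧
      ∀ e ∈ H.edgeSet, ∃ b ∈ U, ¬ (G.deleteEdges {e}).Reachable a b := by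
  induction U using Finset.induction_on with
  | empty =>
    exact ⟨G.singletonSubgraph a, SimpleGraph.Subgraph.singletonSubgraph_connected, by simp,
      by simp, by simp⟩
  | insert b U _ ih =>
    obtain ⟨H, hc, ha, hU, he⟩ := ih
    obtain ⟨p, hp, -⟩ := hT.existsUnique_path a b
    refine ⟨H ⊔ p.toSubgraph, ?_, ?_, ?_, ?_⟩
    · exact SimpleGraph.Subgraph.connected_sup hc.preconnected
        p.toSubgraph_connected.preconnected
        ⟨a, ha, p.start_mem_verts_toSubgraph⟩
    · exact Or.inl ha
    · intro w hw
      rcases Finset.mem_insert.1 (Finset.mem_coe.1 hw) with rfl | hw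
      · exact Or.inr p.end_mem_verts_toSubgraph
      · exact Or.inl (hU hw)
    · intro e h
      rw [SimpleGraph.Subgraph.edgeSet_sup] at h
      rcases h with h | h
      · obtain ⟨c, hc, h⟩ := he e h
        exact ⟨c, Finset.mem_insert_of_mem hc, h⟩
      · exact ⟨b, Finset.mem_insert_self _ _,
          not_reachable_of_mem_path_s18 hT p hp (p.mem_edges_toSubgraph.1 h)⟩

/-- The Steiner distance counts the edges whose removal separates some two of the vertices. -/
lemma steinerDist_eq {n k : ℕ} {G : SimpleGraph (Fin n)} (hT : G.IsTree) (j₀ : Fin k)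
    (i : Fin k → Fin n) :
    steinerDist G (Set.range i) =
      (G.edgeFinset.filter fun e => ∃ j, ¬ (G.deleteEdges {e}).Reachable (i j₀) (i j)).card := by
  have lower : ∀ H : G.Subgraph, H.Connected → Set.range i ⊆ H.verts →
      ((G.edgeFinset.filter fun e => ∃ j, ¬ (G.deleteEdges {e}).Reachable (i j₀) (i j)) : Set _)
        ⊆ H.edgeSet := by
    intro H hH hU e he
    obtain ⟨-, j, hj⟩ := Finset.mem_filter.1 (Finset.mem_coe.1 he)
    by_contra hne
    exact hj (reachable_of_subgraph hH hne (hU ⟨j₀, rfl⟩) (hU ⟨j, rfl⟩))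
  obtain ⟨H, hc, -, hU, he⟩ := exists_steiner_tree hT (i j₀) (Finset.univ.image i)
  have hU' : Set.range i ⊆ H.verts := by simpa using hU
  have heq : H.edgeSet =
      ((G.edgeFinset.filter fun e => ∃ j, ¬ (G.deleteEdges {e}).Reachable (i j₀) (i j)) :
        Set _) := by
    refine Set.Subset.antisymm (fun e h => ?_) (lower H hc hU')
    obtain ⟨b, hb, hr⟩ := he e h
    obtain ⟨j, -, rfl⟩ := Finset.mem_image.1 hb
    exact Finset.mem_coe.2 (Finset.mem_filter.2
      ⟨SimpleGraph.mem_edgeFinset.2 (H.edgeSet_subset h), j, hr⟩)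
  apply le_antisymm
  · exact Nat.sInf_le ⟨H, hc, hU', by rw [heq, Set.ncard_coe_finset]⟩
  · refine le_csInf ⟨_, H, hc, hU', rfl⟩ ?_
    rintro m ⟨K, hK, hKU, rfl⟩
    rw [← Set.ncard_coe_finset]
    exact Set.ncard_le_ncard (lower K hK hKU) (Set.toFinite _)

lemma sum_indicator_prod {n k : ℕ} (c : Fin k → Fin n → ℝ) (B : Finset (Fin n)) :
    ∑ i : Fin k → Fin n, (if ∀ j, i j ∈ B then (1 : ℝ) else 0) * ∏ j, c j (i j) =
      ∏ j, ∑ x ∈ B, c j x := by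
  rw [Finset.prod_univ_sum]
  simp only [ite_mul, one_mul, zero_mul]
  rw [← Finset.sum_filter]
  congr 1
  ext i
  simp [Fintype.mem_piFinset]

lemma steinerForm_eq {n k : ℕ} {G : SimpleGraph (Fin n)} (hT : G.IsTree) (j₀ : Fin k)
    (B : Sym2 (Fin n) → Finset (Fin n)) (hB : ∀ e ∈ G.edgeSet, IsSide G e (B e))
    (c : Fin k → Fin n → ℝ) :
    steinerForm G k c = ∑ e ∈ G.edgeFinset,
      (∏ j, ∑ x, c j x - ∏ j, ∑ x ∈ B e, c j x - ∏ j, ∑ x ∈ (B e)ᶜ, c j x) := by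
  have hS : ∀ i : Fin k → Fin n, (steinerDist G (Set.range i) : ℝ) = ∑ e ∈ G.edgeFinset,
      ((1 : ℝ) - (if ∀ j, i j ∈ B e then (1 : ℝ) else 0)
        - (if ∀ j, i j ∈ (B e)ᶜ then (1 : ℝ) else 0)) := by
    intro i
    rw [steinerDist_eq hT j₀, Finset.card_filter]
    push_cast
    refine Finset.sum_congr rfl fun e he => ?_
    obtain ⟨-, -, h⟩ := hB e (SimpleGraph.mem_edgeFinset.1 he)
    simp only [h, Finset.mem_compl]
    have : Nonempty (Fin k) := ⟨j₀⟩
    by_cases h0 : i j₀ ∈ B e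
    · have h1 : ¬ ∀ j, i j ∉ B e := fun h => h j₀ h0
      by_cases h2 : ∀ j, i j ∈ B e
      · simp [h2]
      · have h3 : ∃ j, i j ∉ B e := by simpa using h2
        simp [h0, h1, h2, h3]
    · have h1 : ¬ ∀ j, i j ∈ B e := fun h => h0 (h j₀)
      by_cases h2 : ∀ j, i j ∉ B e
      · simp [h2]
      · have h3 : ∃ j, i j ∈ B e := by simpa using h2
        simp [h0, h1, h2, h3]
  unfold steinerForm
  simp only [hS, Finset.sum_mul]
  rw [Finset.sum_comm]
  refine Finset.sum_congr rfl fun e _ => ?_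
  simp only [sub_mul, Finset.sum_sub_distrib, sum_indicator_prod, one_mul]
  have htot := sum_indicator_prod c Finset.univ
  simp only [Finset.mem_univ, implies_true, if_true, one_mul] at htot
  rw [htot]

/-! ### Side sums determine the vector -/

lemma eq_zero_of_side_sums {n : ℕ} {G : SimpleGraph (Fin n)} (hT : G.IsTree)
    (B : Sym2 (Fin n) → Finset (Fin n)) (hB : ∀ e ∈ G.edgeSet, IsSide G e (B e))
    (v : Fin n → ℝ) (h0 : ∑ x, v x = 0) (hv : ∀ e ∈ G.edgeSet, ∑ x ∈ B e, v x = 0) :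
    v = 0 := by
  by_contra hne
  obtain ⟨r⟩ := hT.connected.nonempty
  have hsupp : (Finset.univ.filter fun x => v x ≠ 0).Nonempty := by
    obtain ⟨x, hx⟩ := Function.ne_iff.1 hne
    exact ⟨x, by simpa using hx⟩
  obtain ⟨x, hx, hmax⟩ := Finset.exists_max_image _ (fun x => G.dist x r) hsupp
  have hx : v x ≠ 0 := by simpa using hx
  have hfar : ∀ w, G.dist x r < G.dist w r → v w = 0 := by
    intro w hw
    by_contra hvw
    exact absurd (hmax w (by simpa using hvw)) (not_le.2 hw)
  obtain ⟨p, hp⟩ := hT.connected.exists_walk_length_eq_dist x r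
  cases p with
  | nil =>
    apply hx
    rw [← h0]
    refine (Finset.sum_eq_single _ (fun w _ hw => hfar w ?_) (by simp)).symm
    simpa using hT.connected.pos_dist_of_ne hw
  | @cons _ y _ hxy q =>
    rw [SimpleGraph.Walk.length_cons] at hp
    have hyr : (G.deleteEdges {s(x, y)}).Reachable y r := by
      rw [SimpleGraph.reachable_deleteEdges_iff_exists_walk]
      refine ⟨q, fun hq => ?_⟩
      have hs := q.fst_mem_support_of_mem_edges hq
      have h1 := SimpleGraph.dist_le (q.dropUntil x hs)
      have h2 := q.length_dropUntil_le_length hs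
      omega
    have hb : ¬ (G.deleteEdges {s(x, y)}).Reachable x y :=
      SimpleGraph.isBridge_iff.1 (SimpleGraph.isAcyclic_iff_forall_isBridge.1 hT.isAcyclic hxy)
    obtain ⟨-, -, hside⟩ := hB s(x, y) hxy
    have hw0 : ∀ w, w ≠ x → (w ∈ B s(x, y) ↔ x ∈ B s(x, y)) → v w = 0 := by
      intro w hwx hw
      have hwx' := (hside w x).2 hw
      apply hfar
      obtain ⟨p, hp⟩ := hT.connected.exists_walk_length_eq_dist w r
      have he := p.mem_edges_of_not_reachable_deleteEdges (e := s(x, y))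
        (fun h => hb (hwx'.symm.trans (h.trans hyr.symm)))
      have hs := p.fst_mem_support_of_mem_edges he
      have h1 := SimpleGraph.dist_le (p.dropUntil x hs)
      have h2 := p.length_dropUntil_lt_length hs hwx.symm
      omega
    have hv1 := hv s(x, y) hxy
    have hv2 : ∑ w ∈ (B s(x, y))ᶜ, v w = 0 := by
      have := Finset.sum_add_sum_compl (B s(x, y)) v
      linarith
    apply hx
    by_cases hxB : x ∈ B s(x, y)
    · rw [← hv1]
      exact (Finset.sum_eq_single_of_mem x hxB
        fun w hw hwx => hw0 w hwx (by simp [hw, hxB])).symm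
    · rw [← hv2]
      exact (Finset.sum_eq_single_of_mem x (Finset.mem_compl.2 hxB)
        fun w hw hwx => hw0 w hwx (by simp [Finset.mem_compl.1 hw, hxB])).symm

/-! ### The contribution of one edge -/

/-- With `p = |B| / n` and `t = v(B) - σ p`, the contribution of an edge of side `B`. -/
lemma edge_identity (σ p a : ℝ) :
    (σ * σ * σ * σ - a * a * a * (2 * σ * p - a)
        - (σ - a) * (σ - a) * (σ - a) * (σ - (2 * σ * p - a)))
      + (σ * σ * σ * σ - a * (2 * σ * p - a) * (2 * σ * p - a) * (2 * σ * p - a)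
        - (σ - a) * (σ - (2 * σ * p - a)) * (σ - (2 * σ * p - a)) * (σ - (2 * σ * p - a)))
      = 2 * (σ ^ 4 * (1 - p ^ 4 - (1 - p) ^ 4)) + 4 * (a - σ * p) ^ 4 := by
  ring

lemma one_sub_pow_pos {p : ℝ} (h0 : 0 < p) (h1 : p < 1) : 0 < 1 - p ^ 4 - (1 - p) ^ 4 := by
  have : 1 - p ^ 4 - (1 - p) ^ 4 = 2 * (p * (1 - p)) * (2 - p * (1 - p)) := by ring
  rw [this]
  have hq : 0 < p * (1 - p) := mul_pos h0 (by linarith)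
  have : p * (1 - p) < 2 := by nlinarith
  exact mul_pos (by linarith) (by linarith)

theorem stmt18 (n : ℕ) (hn : 3 ≤ n)
    (G : SimpleGraph (Fin n)) (hT : G.IsTree) :
    let A : Matrix (Fin n) (Fin n) ℝ := (2 / (n : ℝ)) • Matrix.of (fun _ _ => 1) - 1
    ∀ v : Fin n → ℝ, v ≠ 0 →
      0 < steinerForm G 4 ![v, v, v, A.mulVec v] +
        steinerForm G 4 ![v, A.mulVec v, A.mulVec v, A.mulVec v] := by
  intro A v hv
  have hn0 : (0 : ℝ) < n := by exact_mod_cast (by omega : 0 < n)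
  have hB' : ∀ e, ∃ B, e ∈ G.edgeSet → IsSide G e B := fun e => by
    by_cases he : e ∈ G.edgeSet
    · obtain ⟨B, hB⟩ := exists_isSide hT e he
      exact ⟨B, fun _ => hB⟩
    · exact ⟨∅, fun h => absurd h he⟩
  choose B hB using hB'
  set σ := ∑ x, v x with hσ
  have hA : ∀ x, A.mulVec v x = 2 / n * σ - v x := by
    intro x
    simp only [A, Matrix.sub_mulVec, Matrix.smul_mulVec, Matrix.one_mulVec, Pi.sub_apply,
      Pi.smul_apply, smul_eq_mul]
    congr 2
    simp [Matrix.mulVec, dotProduct, hσ]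
  have hAS : ∀ S : Finset (Fin n), ∑ x ∈ S, A.mulVec v x
      = 2 * σ * ((S.card : ℝ) / n) - ∑ x ∈ S, v x := by
    intro S
    simp only [hA, Finset.sum_sub_distrib, Finset.sum_const, nsmul_eq_mul]
    ring
  have hAσ : ∑ x, A.mulVec v x = σ := by
    rw [hAS, Finset.card_univ, Fintype.card_fin, div_self hn0.ne', ← hσ]
    ring
  rw [steinerForm_eq hT 0 B hB, steinerForm_eq hT 0 B hB, ← Finset.sum_add_distrib]
  have hterm : ∀ e, (∏ j, ∑ x, (![v, v, v, A.mulVec v] : Fin 4 → Fin n → ℝ) j x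
        - ∏ j, ∑ x ∈ B e, (![v, v, v, A.mulVec v] : Fin 4 → Fin n → ℝ) j x
        - ∏ j, ∑ x ∈ (B e)ᶜ, (![v, v, v, A.mulVec v] : Fin 4 → Fin n → ℝ) j x)
      + (∏ j, ∑ x, (![v, A.mulVec v, A.mulVec v, A.mulVec v] : Fin 4 → Fin n → ℝ) j x
        - ∏ j, ∑ x ∈ B e, (![v, A.mulVec v, A.mulVec v, A.mulVec v] : Fin 4 → Fin n → ℝ) j x
        - ∏ j, ∑ x ∈ (B e)ᶜ, (![v, A.mulVec v, A.mulVec v, A.mulVec v] : Fin 4 → Fin n → ℝ) j x)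
      = 2 * (σ ^ 4 * (1 - (((B e).card : ℝ) / n) ^ 4 - (1 - ((B e).card : ℝ) / n) ^ 4))
        + 4 * (∑ x ∈ B e, v x - σ * (((B e).card : ℝ) / n)) ^ 4 := by
    intro e
    have h1 : ∑ x ∈ (B e)ᶜ, v x = σ - ∑ x ∈ B e, v x := by
      rw [hσ, ← Finset.sum_add_sum_compl (B e) v]; ring
    have h2 : ∑ x ∈ (B e)ᶜ, A.mulVec v x
        = σ - (2 * σ * (((B e).card : ℝ) / n) - ∑ x ∈ B e, v x) := by
      rw [← hAS, ← hAσ, ← Finset.sum_add_sum_compl (B e) (A.mulVec v)]; ring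
    rw [← edge_identity]
    simp only [Fin.prod_univ_four, Matrix.cons_val]
    rw [h1, h2, hAσ, hAS]
  rw [Finset.sum_congr rfl fun e _ => hterm e]
  have hpos : ∀ e ∈ G.edgeSet,
      0 < 1 - (((B e).card : ℝ) / n) ^ 4 - (1 - ((B e).card : ℝ) / n) ^ 4 := by
    intro e he
    obtain ⟨hne, hcne, -⟩ := hB e he
    apply one_sub_pow_pos
    · have : (0 : ℝ) < (B e).card := by exact_mod_cast hne.card_pos
      positivity
    · rw [div_lt_one hn0]
      have h1 := hcne.card_pos
      rw [Finset.card_compl, Fintype.card_fin] at h1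
      exact_mod_cast (by omega : (B e).card < n)
  have hnn1 : ∀ e ∈ G.edgeSet, 0 ≤ σ ^ 4 *
      (1 - (((B e).card : ℝ) / n) ^ 4 - (1 - ((B e).card : ℝ) / n) ^ 4) :=
    fun e he => mul_nonneg (by positivity) (hpos e he).le
  have hnn2 : ∀ e, 0 ≤ (∑ x ∈ B e, v x - σ * (((B e).card : ℝ) / n)) ^ 4 :=
    fun e => by positivity
  have hnn : ∀ e ∈ G.edgeFinset, 0 ≤ 2 * (σ ^ 4 * (1 - (((B e).card : ℝ) / n) ^ 4
      - (1 - ((B e).card : ℝ) / n) ^ 4)) + 4 * (∑ x ∈ B e, v x - σ * (((B e).card : ℝ) / n)) ^ 4 :=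
    fun e he => by
      have := hnn1 e (SimpleGraph.mem_edgeFinset.1 he)
      have := hnn2 e
      linarith
  refine lt_of_le_of_ne (Finset.sum_nonneg hnn) fun hzero => hv ?_
  have hz := (Finset.sum_eq_zero_iff_of_nonneg hnn).1 hzero.symm
  -- a tree on at least two vertices has an edge, and any edge forces the total sum to vanish
  obtain ⟨e₀, he₀⟩ : G.edgeFinset.Nonempty := by
    rw [← Finset.card_pos]
    have := hT.card_edgeFinset
    rw [Fintype.card_fin] at this
    omega
  have hσ0 : σ = 0 := by
    have h1 := hnn1 e₀ (SimpleGraph.mem_edgeFinset.1 he₀)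
    have h2 := hnn2 e₀
    have h3 := hz e₀ he₀
    have h4 : σ ^ 4 * (1 - (((B e₀).card : ℝ) / n) ^ 4 - (1 - ((B e₀).card : ℝ) / n) ^ 4) = 0 := by
      linarith
    have h5 := (mul_eq_zero.1 h4).resolve_right (hpos e₀ (SimpleGraph.mem_edgeFinset.1 he₀)).ne'
    exact eq_zero_of_pow_eq_zero h5
  refine eq_zero_of_side_sums hT B hB v hσ0 fun e he => ?_
  have h3 := hz e (SimpleGraph.mem_edgeFinset.2 he)
  rw [hσ0] at h3
  have h5 : (∑ x ∈ B e, v x) ^ 4 = 0 := by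
    ring_nf at h3 ⊢
    linarith
  exact eq_zero_of_pow_eq_zero h5
end
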